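/- There exists a finite set S of 308 points in ℝ² and two points p, q ∈ S with dist(p,q) = √(11/3), such that the unit-distance graph on S is 4-colorable and every proper 4-coloring c of this graph satisfies c p ≠ c q (i.e., {p,q} is a non-monochromatic pair at distance √(11/3)). -/

import Mathlib

/-!
All points are taken from the lattice of the `((a + b √33) / 12, (c √3 + d √11) / 12)`, where
having distance one is a pair of integer equations. For a displacement of length one these force
`a - b` to be even but not divisible by `8`, so `⌊(a - b) / 2⌋` modulo `4` is a proper coloring of
the whole lattice. Suppose now that some proper coloring gives both points of the pair the same
color. After renaming the colors it is `0`, and the other two vertices of a unit triangle through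
the first point have the colors `1` and `2`. An exhaustive search that always branches at a vertex
with the fewest colors left shows that these four values do not extend to the `308` points.
-/

/-- The point `((a + b √33) / 12, (c √3 + d √11) / 12)` of the plane. The coordinates are natural
numbers so that the kernel computes with them quickly. -/
structure LatticePoint where
  a : ℕ
  b : ℕ
  c : ℕ
  d : ℕ
deriving DecidableEq

theorem irrational_sqrt_thirtyThree : Irrational √33 :=
  irrational_sqrt_ofNat_iff.mpr (by decide +kernel)

theorem intCast_add_intCast_mul_sqrt_thirtyThree_eq_zero_iff {x y : ℤ} :
    (x : ℝ) + y * √33 = 0 ↔ x = 0 ∧ y = 0 := by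
  refine ⟨fun h ↦ ?_, by rintro ⟨rfl, rfl⟩; simp⟩
  have hy : y = 0 := by
    by_contra hy
    exact (irrational_sqrt_thirtyThree.intCast_mul hy).ne_int (-x)
      (by push_cast; linear_combination h)
  subst hy
  simpa using h

theorem sqrt_three_mul_sqrt_eleven : √3 * √11 = √33 := by
  rw [← Real.sqrt_mul (by norm_num)]
  norm_num

namespace LatticePoint

/-- The point of the plane with the given lattice coordinates. -/
noncomputable def toPlane (p : LatticePoint) : EuclideanSpace ℝ (Fin 2) :=
  !₂[(p.a + p.b * √33) / 12, (p.c * √3 + p.d * √11) / 12]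

theorem dist_toPlane_sq (p q : LatticePoint) :
    dist p.toPlane q.toPlane ^ 2 =
      (((p.a - q.a : ℤ) ^ 2 + 33 * (p.b - q.b : ℤ) ^ 2 + 3 * (p.c - q.c : ℤ) ^ 2 +
          11 * (p.d - q.d : ℤ) ^ 2 : ℤ) +
        (2 * ((p.a - q.a) * (p.b - q.b) + (p.c - q.c) * (p.d - q.d)) : ℤ) * √33) / 144 := by
  have h3 : √3 ^ 2 = 3 := Real.sq_sqrt (by norm_num)
  have h11 : √11 ^ 2 = 11 := Real.sq_sqrt (by norm_num)
  have h33 : √33 ^ 2 = 33 := Real.sq_sqrt (by norm_num)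
  simp only [EuclideanSpace.dist_sq_eq, toPlane, Fin.sum_univ_two, Real.dist_eq, sq_abs,
    Matrix.cons_val_zero, Matrix.cons_val_one]
  push_cast
  linear_combination ((p.b - q.b : ℝ) ^ 2 / 144) * h33 + ((p.c - q.c : ℝ) ^ 2 / 144) * h3 +
    ((p.d - q.d : ℝ) ^ 2 / 144) * h11 +
    (2 * (p.c - q.c : ℝ) * (p.d - q.d) / 144) * sqrt_three_mul_sqrt_eleven

theorem toPlane_injective : Function.Injective toPlane := by
  rintro ⟨a, b, c, d⟩ ⟨a', b', c', d'⟩ h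
  have h0 := congrArg (fun x : EuclideanSpace ℝ (Fin 2) ↦ x 0) h
  have h1 := congrArg (fun x : EuclideanSpace ℝ (Fin 2) ↦ x 1) h
  simp only [toPlane, PiLp.toLp_apply, Matrix.cons_val_zero, Matrix.cons_val_one] at h0 h1
  have hab : ((a - a' : ℤ) : ℝ) + (b - b' : ℤ) * √33 = 0 := by
    push_cast
    linear_combination 12 * h0
  have hcd : ((3 * (c - c') : ℤ) : ℝ) + (d - d' : ℤ) * √33 = 0 := by
    have h3 : √3 ^ 2 = 3 := Real.sq_sqrt (by norm_num)
    push_cast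
    linear_combination 12 * √3 * h1 - (c - c' : ℝ) * h3 -
      (d - d' : ℝ) * sqrt_three_mul_sqrt_eleven
  rw [intCast_add_intCast_mul_sqrt_thirtyThree_eq_zero_iff] at hab hcd
  simp only [mk.injEq]
  omega

/-- The equations in `ℕ` for two points to be at distance one. The cheap first equation rules out
most pairs. -/
def IsUnitApart (p q : LatticePoint) : Prop :=
  p.a * p.b + q.a * q.b + (p.c * p.d + q.c * q.d) =
      p.a * q.b + q.a * p.b + (p.c * q.d + q.c * p.d) ∧
    p.a ^ 2 + q.a ^ 2 + 33 * (p.b ^ 2 + q.b ^ 2) + 3 * (p.c ^ 2 + q.c ^ 2) +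
        11 * (p.d ^ 2 + q.d ^ 2) =
      144 + 2 * (p.a * q.a + 33 * (p.b * q.b) + 3 * (p.c * q.c) + 11 * (p.d * q.d))

instance : DecidableRel IsUnitApart := fun _ _ ↦ inferInstanceAs (Decidable (_ ∧ _))

theorem isUnitApart_iff (p q : LatticePoint) :
    p.IsUnitApart q ↔
      (p.a - q.a : ℤ) * (p.b - q.b) + (p.c - q.c) * (p.d - q.d) = 0 ∧
      (p.a - q.a : ℤ) ^ 2 + 33 * (p.b - q.b : ℤ) ^ 2 + 3 * (p.c - q.c : ℤ) ^ 2 +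
        11 * (p.d - q.d : ℤ) ^ 2 = 144 := by
  rw [IsUnitApart]
  zify
  constructor <;> rintro ⟨h, h'⟩ <;> constructor <;> linarith

theorem dist_toPlane_eq_one_iff (p q : LatticePoint) :
    dist p.toPlane q.toPlane = 1 ↔ p.IsUnitApart q := by
  have key : ∀ x y : ℤ, ((x : ℝ) + y * √33) / 144 = 1 ↔ x - 144 = 0 ∧ y = 0 := fun x y ↦ by
    rw [← intCast_add_intCast_mul_sqrt_thirtyThree_eq_zero_iff, div_eq_one_iff_eq (by norm_num),
      ← sub_eq_zero]
    push_cast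
    ring_nf
  rw [← pow_eq_one_iff_of_nonneg dist_nonneg two_ne_zero, dist_toPlane_sq, key,
    isUnitApart_iff, and_comm, sub_eq_zero]
  simp

end LatticePoint

theorem even_sub_of_unit {a b c d : ℤ} (h₀ : a * b + c * d = 0)
    (h₁ : a ^ 2 + 33 * b ^ 2 + 3 * c ^ 2 + 11 * d ^ 2 = 144) : Even (a - b) := by
  by_contra hodd
  have hsq : 8 ∣ (a - b) ^ 2 - 1 :=
    Int.eight_dvd_sq_sub_one_of_odd (Int.not_even_iff_odd.mp hodd)
  -- Modulo 8, `h₁ - 2 * h₀` completes the square in `a` and `b`.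
  have hmod : 8 ∣ 3 * c ^ 2 - 2 * c * d + 3 * d ^ 2 + 1 := by
    obtain ⟨k, hk⟩ := hsq
    exact ⟨18 - k - 4 * b ^ 2 - d ^ 2, by linear_combination h₁ - 2 * h₀ - hk⟩
  have key : ∀ x y : ZMod 8, 3 * x ^ 2 - 2 * x * y + 3 * y ^ 2 + 1 ≠ 0 := by decide +kernel
  have h8 := (ZMod.intCast_zmod_eq_zero_iff_dvd _ 8).mpr hmod
  push_cast at h8
  exact key _ _ h8

theorem not_eight_dvd_sub_of_unit {a b c d : ℤ} (h₀ : a * b + c * d = 0)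
    (h₁ : a ^ 2 + 33 * b ^ 2 + 3 * c ^ 2 + 11 * d ^ 2 = 144) : ¬ 8 ∣ a - b := by
  rintro ⟨k, hk⟩
  obtain rfl : a = b + 8 * k := by linear_combination hk
  obtain ⟨f, hf⟩ : Even (c - 3 * d) := by
    have hsq : Even ((c - 3 * d) ^ 2) :=
      ⟨72 - 32 * k ^ 2 - 16 * b ^ 2 - (c + d) ^ 2, by linear_combination h₁ - 2 * h₀⟩
    exact (Int.even_pow.mp hsq).1
  obtain rfl : c = 3 * d + 2 * f := by linear_combination hf
  have hmod : 16 ∣ 3 * f ^ 2 - 8 * d * f - 36 :=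
    ⟨4 * k * b + d ^ 2 - k ^ 2, by linarith [h₁, h₀]⟩
  have key : ∀ x y : ZMod 16, 3 * y ^ 2 - 8 * x * y - 36 ≠ 0 := by decide +kernel
  have h16 := (ZMod.intCast_zmod_eq_zero_iff_dvd _ 16).mpr hmod
  push_cast at h16
  exact key _ _ h16

namespace ColoringSearch

/-- `force n f` is `f n`, arranged so that the kernel evaluates `n` to a numeral before it unfolds
`f`, and hence only once. -/
def force {α : Type*} : ℕ → (ℕ → α) → α
  | 0, f => f 0
  | n + 1, f => f n.succ

theorem force_eq {α : Type*} (n : ℕ) (f : ℕ → α) : force n f = f n := by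
  cases n <;> rfl

/-- The analogue of `force` for a list of numbers. -/
def forceList {α : Type*} : List ℕ → (List ℕ → α) → α
  | [], f => f []
  | n :: l, f => force n fun n ↦ forceList l fun l ↦ f (n :: l)

theorem forceList_eq {α : Type*} (l : List ℕ) (f : List ℕ → α) : forceList l f = f l := by
  induction l generalizing f with
  | nil => rfl
  | cons n l ih => rw [forceList, force_eq, ih]

section AdjacencyMatrix

variable {α : Type*} (r : α → α → Prop) [DecidableRel r]

/-- The row of `p` in the adjacency matrix of the relation `r`: bit `j` tells whether `r p` holds
at the `j`-th element of the list. -/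
def adjacencyRow (p : α) : List α → ℕ
  | [] => 0
  | q :: l => Nat.bit (decide (r p q)) (adjacencyRow p l)

/-- The adjacency matrix of the relation `r` on the list `l` as a number: bit `l.length * i + j`
tells whether the `i`-th and the `j`-th element are related. -/
def adjacencyMatrix (l : List α) : ℕ :=
  Nat.ofDigits (2 ^ l.length) (l.map fun p ↦ adjacencyRow r p l)

variable {r}

theorem testBit_adjacencyRow (p : α) {l : List α} {j : ℕ} (hj : j < l.length) :
    (adjacencyRow r p l).testBit j = decide (r p l[j]) := by
  induction l generalizing j with
  | nil => simp at hj
  | cons q l ih =>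
    cases j with
    | zero => exact Nat.testBit_bit_zero _ _
    | succ j => exact (Nat.testBit_bit_succ _ _ _).trans (ih (Nat.lt_of_succ_lt_succ hj))

theorem adjacencyRow_lt (p : α) (l : List α) : adjacencyRow r p l < 2 ^ l.length := by
  induction l with
  | nil => simp [adjacencyRow]
  | cons q l ih =>
    rw [adjacencyRow, List.length_cons, Nat.bit_lt_two_pow_succ_iff]
    exact ih

theorem testBit_ofDigits_two_pow {w : ℕ} {L : List ℕ} (hL : ∀ x ∈ L, x < 2 ^ w) {i j : ℕ}
    (hi : i < L.length) (hj : j < w) :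
    (Nat.ofDigits (2 ^ w) L).testBit (w * i + j) = L[i].testBit j := by
  induction L generalizing i with
  | nil => simp at hi
  | cons x L ih =>
    rw [List.forall_mem_cons] at hL
    rw [Nat.ofDigits_cons, Nat.add_comm, Nat.testBit_two_pow_mul_add _ hL.1]
    cases i with
    | zero => simp [hj]
    | succ i =>
      rw [if_neg (by rw [Nat.mul_succ]; omega), Nat.mul_succ, add_right_comm, Nat.add_sub_cancel]
      exact ih hL.2 (Nat.lt_of_succ_lt_succ hi)

theorem testBit_adjacencyMatrix {l : List α} {i j : ℕ} (hi : i < l.length) (hj : j < l.length) :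
    (adjacencyMatrix r l >>> (l.length * i)).testBit j = decide (r l[i] l[j]) := by
  have hrow : ∀ x ∈ l.map fun p ↦ adjacencyRow r p l, x < 2 ^ l.length := by
    simp [adjacencyRow_lt]
  rw [Nat.testBit_shiftRight, adjacencyMatrix, testBit_ofDigits_two_pow hrow (by simpa) hj,
    List.getElem_map, testBit_adjacencyRow]

end AdjacencyMatrix

/-- The difference `m \ s` of two numbers regarded as sets of binary digits. Here and in the search
the operations are written `Nat.xor`, `Nat.land`, ... instead of `^^^`, `&&&`, ..., which the kernel
would have to unfold before it computes. -/
def clearBits (m s : ℕ) : ℕ := m.xor (m.land s)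

theorem testBit_clearBits (m s i : ℕ) :
    (clearBits m s).testBit i = (m.testBit i && !s.testBit i) := by
  change (m ^^^ (m &&& s)).testBit i = _
  rw [Nat.testBit_xor, Nat.testBit_and]
  cases m.testBit i <;> cases s.testBit i <;> rfl

/-- Whether `P` holds after every assignment of an allowed color to the vertex with bit `b` and the
set `s` of neighbors, which means for all lists that arise from `domains` by removing `s` from a
domain with the bit `b`. -/
def forallAssign (b s : ℕ) : List ℕ → (List ℕ → Bool) → Bool
  | [], _ => true
  | m :: l, P =>
    (bif (m.land b).beq 0 then true else P (clearBits m s :: l)) &&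
      forallAssign b s l fun l ↦ P (m :: l)

/-- The vertices in the set `uncolored` that should be colored next: those without any color left,
or else those with one color left, or else all. The accumulators `once` and `twice` are the
vertices seen so far in at least one and in at least two domains. -/
def mostConstrained (uncolored once twice : ℕ) : List ℕ → ℕ
  | [] =>
    let stuck := clearBits uncolored once
    let forced := clearBits uncolored twice
    bif stuck.beq 0 then bif forced.beq 0 then uncolored else forced else stuck
  | m :: l => mostConstrained uncolored (once.lor m) (twice.lor (once.land m)) l

/-- Exhaustive search for a coloring of the graph on the vertices below `n` with adjacency matrix
`adj`: it branches on the color of the first of the most constrained vertices, and returns `true`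
if no branch survives. Bit `v` of the `i`-th domain tells whether the vertex `v` may get the color
`i`. The greatest common divisor with `2 ^ n` isolates the lowest bit of a set, or is `2 ^ n` for
the empty set. -/
def refutes (adj n : ℕ) : (fuel uncolored : ℕ) → (domains : List ℕ) → Bool
  | 0, _, _ => false
  | fuel + 1, uncolored, domains =>
    forceList domains fun domains ↦
      force ((mostConstrained uncolored 0 0 domains).gcd (Nat.pow 2 n)) fun b ↦
        !b.beq (Nat.pow 2 n) &&
          force (uncolored.xor b) fun uncolored ↦
            forallAssign b (adj.div (b.pow n)) domains (refutes adj n fuel uncolored)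

/-- The coloring `c` of the vertices below `n` takes only colors that are allowed by the
domains. -/
def Admits (n : ℕ) (domains : List ℕ) (c : ℕ → ℕ) : Prop :=
  ∀ v < n, (domains.getD (c v) 0).testBit v = true

/-- The coloring `c` is proper for the graph on `n` vertices with adjacency matrix `adj`. -/
def IsProper (adj n : ℕ) (c : ℕ → ℕ) : Prop :=
  ∀ v < n, ∀ w < n, (adj >>> (n * v)).testBit w = true → c v ≠ c w

/-- Remove the neighbors of the vertex `v` from the domain of the color `i`. -/
def assign (adj n v i : ℕ) (domains : List ℕ) : List ℕ :=
  domains.modify i fun m ↦ clearBits m (adj >>> (n * v))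

theorem forallAssign_apply {b s i : ℕ} {domains : List ℕ} {P : List ℕ → Bool}
    (h : forallAssign b s domains P = true) (hi : domains.getD i 0 &&& b ≠ 0) :
    P (domains.modify i fun m ↦ clearBits m s) = true := by
  induction domains generalizing i P with
  | nil => simp at hi
  | cons m l ih =>
    rw [forallAssign, Bool.and_eq_true] at h
    cases i with
    | zero =>
      have hm : (m.land b).beq 0 = false :=
        Bool.eq_false_iff.mpr fun h ↦ hi (Nat.eq_of_beq_eq_true h)
      have hP := h.1
      rwa [hm, cond_false] at hP
    | succ i => exact ih h.2 hi

section Soundness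

variable {adj n : ℕ} {c : ℕ → ℕ}

theorem admits_assign {domains : List ℕ} {v : ℕ} (hc : IsProper adj n c)
    (hd : Admits n domains c) (hv : v < n) : Admits n (assign adj n v (c v) domains) c := by
  intro w hw
  have hdw := hd w hw
  rw [List.getD_eq_getElem?_getD] at hdw ⊢
  rw [assign, List.getElem?_modify]
  cases hget : domains[c w]? with
  | none => simp [hget] at hdw
  | some m =>
    have hm : m.testBit w = true := by simpa [hget] using hdw
    by_cases hvw : c v = c w
    · have hrow : (adj >>> (n * v)).testBit w = false :=
        Bool.eq_false_iff.mpr fun h ↦ hc v hv w hw h hvw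
      simp [hvw, testBit_clearBits, hm, hrow]
    · simp [hvw, hm]

theorem refutes_eq_false (hc : IsProper adj n c) {fuel uncolored : ℕ} {domains : List ℕ}
    (hd : Admits n domains c) : refutes adj n fuel uncolored domains = false := by
  induction fuel generalizing uncolored domains with
  | zero => rfl
  | succ fuel ih =>
    by_contra h
    simp only [refutes, force_eq, forceList_eq, Bool.not_eq_false, Bool.and_eq_true] at h
    generalize mostConstrained uncolored 0 0 domains = u at h
    obtain ⟨v, hvn, hb⟩ : ∃ v ≤ n, u.gcd (2 ^ n) = 2 ^ v :=
      (Nat.dvd_prime_pow Nat.prime_two).mp (Nat.gcd_dvd_right _ _)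
    change (!(u.gcd (2 ^ n)).beq (2 ^ n)) = true ∧
      forallAssign (u.gcd (2 ^ n)) (adj / u.gcd (2 ^ n) ^ n) domains _ = true at h
    rw [hb, ← pow_mul, mul_comm v, ← Nat.shiftRight_eq_div_pow] at h
    have hv : v < n := hvn.lt_of_ne fun hvn ↦ by simp [hvn] at h
    have hcolor : domains.getD (c v) 0 &&& 2 ^ v ≠ 0 := by
      rw [Nat.and_two_pow, hd v hv]
      simp
    exact Bool.false_ne_true ((ih (admits_assign hc hd hv)).symm.trans
      (forallAssign_apply h.2 hcolor))

theorem admits_foldr_assign {k : ℕ} (hc : IsProper adj n c) (hck : ∀ v < n, c v < k)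
    {pre : List (Fin k × ℕ)} (hpre : ∀ x ∈ pre, x.2 < n ∧ c x.2 = x.1) :
    Admits n (pre.foldr (fun x ↦ assign adj n x.2 x.1) (List.replicate k (2 ^ n - 1))) c := by
  induction pre with
  | nil =>
    intro v hv
    simp [hck v hv, hv]
  | cons x pre ih =>
    rw [List.forall_mem_cons] at hpre
    rw [List.foldr_cons, ← hpre.1.2]
    exact admits_assign hc (ih hpre.2) hpre.1.1

end Soundness

/-- The verdict of the exhaustive search for a proper coloring with `k` colors of the graph with
vertices `l` and adjacency relation `r`, in which the colors of the first vertices are prescribed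
by the list `pre`: the value `true` means that there is none. -/
def refutesColoring {α : Type*} (r : α → α → Prop) [DecidableRel r] (l : List α) {k : ℕ}
    (pre : List (Fin k)) : Bool :=
  force (adjacencyMatrix r l) fun adj ↦ force l.length fun n ↦
    refutes adj n (n + 1) (2 ^ n - 2 ^ pre.length)
      (pre.zipIdx.foldr (fun x ↦ assign adj n x.2 x.1) (List.replicate k (2 ^ n - 1)))

theorem not_isPrefix_map_of_refutesColoring {α : Type*} {r : α → α → Prop} [DecidableRel r]
    {l : List α} {k : ℕ} {pre : List (Fin k)} (h : refutesColoring r l pre) {c : α → Fin k}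
    (hc : ∀ p ∈ l, ∀ q ∈ l, r p q → c p ≠ c q) : ¬ pre <+: l.map c := by
  intro hpre
  rw [refutesColoring, force_eq, force_eq] at h
  let c' : ℕ → ℕ := fun v ↦ (l.map fun p ↦ (c p : ℕ)).getD v 0
  have hc' : ∀ v (hv : v < l.length), c' v = c l[v] := fun v hv ↦ by simp [c', hv]
  have hproper : IsProper (adjacencyMatrix r l) l.length c' := by
    intro v hv w hw hvw
    rw [testBit_adjacencyMatrix hv hw, decide_eq_true_iff] at hvw
    rw [hc' v hv, hc' w hw, Ne, Fin.val_inj]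
    exact hc _ (List.getElem_mem hv) _ (List.getElem_mem hw) hvw
  have hck : ∀ v < l.length, c' v < k := fun v hv ↦ hc' v hv ▸ (c l[v]).isLt
  have hadmits := admits_foldr_assign (pre := pre.zipIdx) hproper hck fun x hx ↦ by
    rw [List.mem_zipIdx_iff_getElem?, List.getElem?_eq_some_iff] at hx
    obtain ⟨hlt, hx⟩ := hx
    have hlt' : x.2 < l.length := by simpa using hlt.trans_le hpre.length_le
    rw [hc' _ hlt', ← hx, hpre.getElem hlt, List.getElem_map]
    exact ⟨hlt', rfl⟩
  exact Bool.false_ne_true ((refutes_eq_false hproper hadmits).symm.trans h)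

end ColoringSearch

open ColoringSearch

namespace LatticePoint

/-- The color `⌊(a - b) / 2⌋` modulo `4`, which gives a proper coloring of all lattice points. -/
def color (p : LatticePoint) : Fin 4 :=
  (((p.a - p.b : ℤ) / 2 : ℤ) : ZMod 4)

theorem IsUnitApart.color_ne {p q : LatticePoint} (h : p.IsUnitApart q) : p.color ≠ q.color := by
  obtain ⟨h₀, h₁⟩ := (isUnitApart_iff p q).mp h
  obtain ⟨k, hk⟩ := even_sub_of_unit h₀ h₁
  have h8 := not_eight_dvd_sub_of_unit h₀ h₁
  intro hcolor
  have h4 := (ZMod.intCast_eq_intCast_iff_dvd_sub _ _ 4).mp hcolor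
  omega

/-- The first point of the pair that is never monochromatic. -/
def pairFst : LatticePoint := ⟨18, 1, 10, 4⟩

/-- The second point of the pair that is never monochromatic. -/
def pairSnd : LatticePoint := ⟨18, 5, 10, 4⟩

/-- A vertex of a unit triangle with `pairFst` and `apexSnd`. -/
def apexFst : LatticePoint := ⟨15, 2, 11, 7⟩

/-- A vertex of a unit triangle with `pairFst` and `apexFst`. -/
def apexSnd : LatticePoint := ⟨18, 3, 12, 4⟩

/-- The lattice coordinates of the `308` points. Their order is the order in which the exhaustive
search prefers them for branching; it comes from a local search for a small search tree. -/
def points : List LatticePoint :=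
  [pairFst, pairSnd, apexFst, apexSnd] ++
    [⟨24, 3, 10, 4⟩, ⟨18, 3, 8, 4⟩, ⟨18, 1, 6, 4⟩, ⟨15, 4, 9, 7⟩, ⟨21, 2, 13, 7⟩, ⟨24, 3, 6, 4⟩,
    ⟨15, 2, 7, 7⟩, ⟨12, 3, 10, 4⟩, ⟨21, 2, 5, 7⟩, ⟨21, 2, 9, 7⟩, ⟨18, 3, 4, 4⟩, ⟨12, 3, 6, 4⟩,
    ⟨12, 3, 14, 4⟩, ⟨9, 2, 9, 7⟩, ⟨12, 1, 12, 4⟩, ⟨27, 2, 7, 7⟩, ⟨27, 4, 9, 7⟩, ⟨24, 1, 12, 4⟩,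
    ⟨30, 3, 8, 4⟩, ⟨27, 2, 11, 7⟩, ⟨18, 1, 14, 4⟩, ⟨15, 4, 13, 7⟩, ⟨15, 4, 5, 7⟩, ⟨16, 3, 8, 6⟩,
    ⟨30, 3, 4, 4⟩, ⟨19, 4, 11, 5⟩, ⟨14, 3, 10, 6⟩, ⟨21, 4, 9, 1⟩, ⟨25, 4, 9, 5⟩, ⟨18, 1, 2, 4⟩,
    ⟨16, 3, 12, 6⟩, ⟨17, 2, 13, 3⟩, ⟨20, 3, 12, 6⟩, ⟨16, 3, 6, 8⟩, ⟨11, 2, 11, 3⟩, ⟨23, 2, 11, 3⟩,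
    ⟨15, 2, 9, 1⟩, ⟨13, 4, 15, 3⟩, ⟨17, 4, 9, 5⟩, ⟨8, 3, 12, 2⟩, ⟨17, 4, 13, 5⟩, ⟨14, 3, 10, 2⟩,
    ⟨13, 2, 13, 3⟩, ⟨22, 1, 8, 6⟩, ⟨29, 2, 9, 3⟩, ⟨29, 4, 9, 5⟩, ⟨17, 2, 9, 3⟩, ⟨3, 4, 5, 7⟩,
    ⟨16, 3, 16, 6⟩, ⟨25, 2, 5, 3⟩, ⟨19, 2, 7, 3⟩, ⟨3, 2, 7, 7⟩, ⟨20, 1, 6, 6⟩, ⟨24, 3, 2, 4⟩,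
    ⟨20, 1, 10, 6⟩, ⟨19, 2, 15, 3⟩, ⟨28, 3, 10, 4⟩, ⟨26, 1, 8, 6⟩, ⟨6, 1, 14, 4⟩, ⟨23, 2, 9, 5⟩,
    ⟨13, 2, 9, 3⟩, ⟨14, 1, 12, 6⟩, ⟨29, 2, 17, 3⟩, ⟨20, 3, 4, 2⟩, ⟨3, 4, 9, 7⟩, ⟨17, 2, 7, 5⟩,
    ⟨11, 2, 5, 5⟩, ⟨29, 2, 11, 5⟩, ⟨17, 2, 5, 3⟩, ⟨22, 3, 10, 6⟩, ⟨14, 3, 8, 8⟩, ⟨22, 1, 12, 6⟩,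
    ⟨24, 1, 8, 4⟩, ⟨11, 4, 7, 5⟩, ⟨11, 4, 9, 3⟩, ⟨16, 1, 6, 6⟩, ⟨13, 2, 7, 5⟩, ⟨16, 3, 10, 8⟩,
    ⟨9, 4, 15, 7⟩, ⟨13, 2, 5, 3⟩, ⟨13, 4, 7, 3⟩, ⟨20, 1, 10, 2⟩, ⟨22, 3, 6, 6⟩, ⟨23, 2, 5, 5⟩,
    ⟨5, 2, 11, 5⟩, ⟨20, 3, 10, 4⟩, ⟨18, 3, 10, 2⟩, ⟨23, 4, 7, 5⟩, ⟨8, 3, 10, 8⟩, ⟨31, 2, 11, 3⟩,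
    ⟨19, 2, 5, 5⟩, ⟨8, 1, 10, 2⟩, ⟨23, 4, 5, 3⟩, ⟨21, 4, 11, 7⟩, ⟨22, 3, 4, 8⟩, ⟨11, 2, 9, 5⟩,
    ⟨11, 2, 13, 5⟩, ⟨28, 1, 10, 6⟩, ⟨31, 4, 11, 5⟩, ⟨16, 1, 10, 6⟩, ⟨23, 2, 7, 3⟩, ⟨10, 3, 8, 8⟩,
    ⟨20, 3, 12, 2⟩, ⟨22, 3, 8, 8⟩, ⟨26, 3, 14, 6⟩, ⟨14, 3, 2, 6⟩, ⟨25, 2, 7, 5⟩, ⟨25, 2, 13, 3⟩,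
    ⟨19, 4, 9, 3⟩, ⟨9, 4, 7, 7⟩, ⟨14, 3, 6, 6⟩, ⟨10, 3, 6, 6⟩, ⟨19, 2, 13, 5⟩, ⟨22, 3, 12, 8⟩,
    ⟨13, 4, 5, 5⟩, ⟨25, 2, 11, 5⟩, ⟨20, 1, 14, 6⟩, ⟨11, 2, 7, 3⟩, ⟨6, 3, 16, 4⟩, ⟨19, 4, 15, 5⟩,
    ⟨22, 3, 10, 2⟩, ⟨10, 5, 8, 6⟩, ⟨14, 1, 8, 6⟩, ⟨21, 2, 19, 1⟩, ⟨23, 2, 13, 5⟩, ⟨19, 4, 13, 3⟩,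
    ⟨3, 2, 11, 7⟩, ⟨26, 1, 12, 6⟩, ⟨21, 4, 7, 7⟩, ⟨21, 2, 17, 7⟩, ⟨26, 1, 16, 6⟩, ⟨15, 2, 5, 5⟩,
    ⟨16, 3, 14, 8⟩, ⟨30, 1, 6, 4⟩, ⟨8, 1, 6, 6⟩, ⟨17, 2, 11, 9⟩, ⟨20, 1, 14, 2⟩, ⟨6, 3, 12, 4⟩,
    ⟨21, 0, 3, 7⟩, ⟨31, 2, 9, 5⟩, ⟨30, 1, 14, 4⟩, ⟨32, 3, 12, 6⟩, ⟨17, 2, 15, 5⟩, ⟨16, 3, 4, 6⟩,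
    ⟨9, 4, 5, 1⟩, ⟨25, 2, 9, 3⟩, ⟨28, 3, 10, 8⟩, ⟨27, 2, 3, 7⟩, ⟨32, 1, 10, 6⟩, ⟨16, 3, 4, 2⟩,
    ⟨19, 2, 9, 5⟩, ⟨27, 0, 13, 7⟩, ⟨28, 3, 12, 6⟩, ⟨29, 2, 13, 3⟩, ⟨16, 1, 14, 6⟩, ⟨25, 4, 15, 3⟩,
    ⟨36, 3, 6, 4⟩, ⟨20, 3, 4, 6⟩, ⟨18, 3, 10, 6⟩, ⟨16, 3, 6, 4⟩, ⟨10, 3, 10, 6⟩, ⟨23, 2, 15, 3⟩,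
    ⟨10, 3, 10, 2⟩, ⟨17, 4, 15, 3⟩, ⟨17, 4, 5, 5⟩, ⟨26, 3, 12, 8⟩, ⟨20, 3, 10, 8⟩, ⟨14, 3, 4, 8⟩,
    ⟨28, 3, 8, 6⟩, ⟨9, 4, 11, 7⟩, ⟨23, 4, 15, 5⟩, ⟨6, 3, 4, 4⟩, ⟨19, 2, 11, 3⟩, ⟨31, 4, 9, 3⟩,
    ⟨8, 5, 10, 6⟩, ⟨28, 3, 10, 0⟩, ⟨8, 3, 12, 6⟩, ⟨26, 3, 8, 8⟩, ⟨15, 4, 11, 1⟩, ⟨29, 4, 11, 3⟩,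
    ⟨21, 4, 3, 7⟩, ⟨25, 4, 5, 5⟩, ⟨17, 2, 11, 5⟩, ⟨23, 4, 11, 5⟩, ⟨13, 2, 15, 5⟩, ⟨20, 3, 16, 6⟩,
    ⟨14, 3, 14, 6⟩, ⟨13, 2, 11, 5⟩, ⟨13, 4, 9, 5⟩, ⟨20, 3, 8, 6⟩, ⟨14, 1, 4, 6⟩, ⟨25, 2, 15, 5⟩,
    ⟨6, 3, 8, 4⟩, ⟨36, 3, 14, 4⟩, ⟨27, 2, 9, 1⟩, ⟨27, 2, 15, 7⟩, ⟨24, 3, 14, 4⟩, ⟨24, 3, 18, 4⟩,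
    ⟨18, 3, 20, 4⟩, ⟨24, 5, 16, 4⟩, ⟨15, 2, 13, 1⟩, ⟨14, 3, 6, 2⟩, ⟨21, 2, 11, 5⟩, ⟨20, 3, 10, 0⟩,
    ⟨16, 3, 14, 0⟩, ⟨15, 2, 3, 7⟩, ⟨29, 2, 7, 5⟩, ⟨33, 2, 13, 7⟩, ⟨18, 3, 16, 4⟩, ⟨24, 5, 4, 4⟩,
    ⟨24, 1, 4, 4⟩, ⟨14, 3, 14, 2⟩, ⟨27, 4, 5, 7⟩, ⟨12, 5, 8, 4⟩, ⟨15, 4, 15, 1⟩, ⟨24, 5, 8, 4⟩,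
    ⟨21, 2, 1, 7⟩, ⟨15, 2, 15, 3⟩, ⟨20, 5, 10, 2⟩, ⟨22, 3, 14, 2⟩, ⟨9, 2, 11, 1⟩, ⟨5, 2, 15, 5⟩,
    ⟨8, 3, 10, 4⟩, ⟨11, 4, 11, 5⟩, ⟨15, 0, 9, 7⟩, ⟨8, 3, 8, 6⟩, ⟨3, 2, 3, 7⟩, ⟨25, 4, 11, 3⟩,
    ⟨0, 3, 10, 4⟩, ⟨21, 4, 19, 7⟩, ⟨22, 3, 16, 8⟩, ⟨24, 1, 16, 4⟩, ⟨16, 1, 12, 8⟩, ⟨29, 4, 13, 5⟩,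
    ⟨18, 5, 2, 4⟩, ⟨6, 1, 10, 4⟩, ⟨5, 4, 13, 5⟩, ⟨15, 4, 1, 7⟩, ⟨18, 5, 6, 4⟩, ⟨22, 3, 14, 6⟩,
    ⟨9, 4, 9, 1⟩, ⟨30, 5, 10, 4⟩, ⟨9, 2, 5, 7⟩, ⟨27, 4, 15, 1⟩, ⟨21, 2, 7, 1⟩, ⟨18, 3, 0, 4⟩,
    ⟨21, 0, 15, 7⟩, ⟨21, 4, 15, 7⟩, ⟨0, 3, 6, 4⟩, ⟨26, 3, 10, 6⟩, ⟨26, 3, 6, 6⟩, ⟨23, 4, 3, 5⟩,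
    ⟨19, 4, 3, 5⟩, ⟨7, 4, 9, 3⟩, ⟨12, 3, 8, 10⟩, ⟨17, 4, 11, 3⟩, ⟨27, 4, 11, 1⟩, ⟨6, 5, 6, 4⟩,
    ⟨9, 2, 13, 7⟩, ⟨19, 4, 7, 5⟩, ⟨14, 5, 4, 2⟩, ⟨33, 4, 11, 7⟩, ⟨27, 2, 5, 1⟩, ⟨21, 0, 7, 7⟩,
    ⟨21, 2, 11, 1⟩, ⟨15, 2, 5, 1⟩, ⟨18, 1, 18, 4⟩, ⟨26, 3, 14, 2⟩, ⟨18, 5, 14, 4⟩, ⟨12, 5, 4, 4⟩,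
    ⟨20, 5, 6, 2⟩, ⟨28, 1, 6, 6⟩, ⟨24, 3, 8, 10⟩, ⟨20, 3, 8, 2⟩, ⟨12, 3, 4, 10⟩, ⟨11, 4, 11, 9⟩,
    ⟨6, 3, 10, 10⟩, ⟨6, 5, 14, 4⟩, ⟨15, 2, 15, 7⟩, ⟨12, 1, 8, 4⟩, ⟨25, 2, 3, 5⟩, ⟨27, 4, 1, 7⟩,
    ⟨26, 3, 6, 2⟩, ⟨33, 2, 5, 7⟩, ⟨23, 2, 17, 5⟩, ⟨30, 1, 10, 4⟩, ⟨20, 5, 14, 6⟩, ⟨14, 3, 12, 8⟩,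
    ⟨7, 2, 11, 3⟩, ⟨27, 2, 13, 1⟩, ⟨6, 3, 6, 10⟩, ⟨21, 0, 11, 7⟩, ⟨5, 4, 9, 5⟩, ⟨11, 4, 3, 5⟩,
    ⟨30, 3, 12, 4⟩, ⟨8, 5, 14, 6⟩, ⟨12, 3, 12, 10⟩, ⟨33, 4, 7, 7⟩, ⟨26, 1, 4, 6⟩, ⟨18, 3, 10, 10⟩,
    ⟨19, 2, 17, 5⟩, ⟨17, 4, 3, 3⟩, ⟨7, 2, 9, 5⟩, ⟨13, 2, 17, 3⟩]

theorem length_points : points.length = 308 := by decide +kernel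

theorem nodup_points : points.Nodup := by decide +kernel

theorem pairFst_mem_points : pairFst ∈ points := by decide +kernel

theorem pairSnd_mem_points : pairSnd ∈ points := by decide +kernel

theorem refutesColoring_points : refutesColoring IsUnitApart points (k := 4) [0, 0, 1, 2] := by
  decide +kernel

theorem exists_perm_fin_four {x y z : Fin 4} (hxy : x ≠ y) (hxz : x ≠ z) (hyz : y ≠ z) :
    ∃ σ : Equiv.Perm (Fin 4), σ x = 0 ∧ σ y = 1 ∧ σ z = 2 := by
  decide +revert +kernel

theorem apply_pairFst_ne_apply_pairSnd {c : LatticePoint → Fin 4}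
    (hc : ∀ p ∈ points, ∀ q ∈ points, p.IsUnitApart q → c p ≠ c q) : c pairFst ≠ c pairSnd := by
  intro h
  have hx : apexFst ∈ points := by decide +kernel
  have hy : apexSnd ∈ points := by decide +kernel
  obtain ⟨σ, hσp, hσx, hσy⟩ := exists_perm_fin_four
    (hc _ pairFst_mem_points _ hx (by decide +kernel))
    (hc _ pairFst_mem_points _ hy (by decide +kernel)) (hc _ hx _ hy (by decide +kernel))
  refine not_isPrefix_map_of_refutesColoring refutesColoring_points (c := fun p ↦ σ (c p))
    (fun p hp q hq hpq ↦ σ.injective.ne (hc p hp q hq hpq)) ?_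
  have hmap : [0, 0, 1, 2] = [pairFst, pairSnd, apexFst, apexSnd].map fun p ↦ σ (c p) := by
    simp [← h, hσp, hσx, hσy]
  rw [hmap]
  exact (List.prefix_append _ _).map _

theorem dist_toPlane_pairFst_pairSnd : dist pairFst.toPlane pairSnd.toPlane = √(11 / 3) := by
  rw [eq_comm, Real.sqrt_eq_iff_eq_sq (by norm_num) dist_nonneg, dist_toPlane_sq]
  norm_num [pairFst, pairSnd]

end LatticePoint

open LatticePoint

theorem stmt_8 :
    ∃ S : Set (EuclideanSpace ℝ (Fin 2)), S.Finite ∧ S.ncard = 308 ∧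
      ∃ p ∈ S, ∃ q ∈ S, dist p q = Real.sqrt (11 / 3) ∧
        (∃ c : EuclideanSpace ℝ (Fin 2) → Fin 4, (∀ x ∈ S, ∀ y ∈ S, dist x y = 1 → c x ≠ c y)) ∧
        (∀ c : EuclideanSpace ℝ (Fin 2) → Fin 4, (∀ x ∈ S, ∀ y ∈ S, dist x y = 1 → c x ≠ c y) → c p ≠ c q) := by
  refine ⟨toPlane '' {p | p ∈ points}, points.finite_toSet.image _, ?_,
    pairFst.toPlane, ⟨_, pairFst_mem_points, rfl⟩, pairSnd.toPlane, ⟨_, pairSnd_mem_points, rfl⟩,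
    dist_toPlane_pairFst_pairSnd, ⟨Function.extend toPlane color 0, ?_⟩, fun c hc ↦ ?_⟩
  · rw [Set.ncard_image_of_injective _ toPlane_injective, ← List.coe_toFinset,
      Set.ncard_coe_finset, List.toFinset_card_of_nodup nodup_points, length_points]
  · rintro _ ⟨p, -, rfl⟩ _ ⟨q, -, rfl⟩ h
    rw [toPlane_injective.extend_apply, toPlane_injective.extend_apply]
    exact ((dist_toPlane_eq_one_iff p q).mp h).color_ne
  · exact apply_pairFst_ne_apply_pairSnd (c := fun p ↦ c p.toPlane) fun p hp q hq hpq ↦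
      hc _ ⟨p, hp, rfl⟩ _ ⟨q, hq, rfl⟩ ((dist_toPlane_eq_one_iff p q).mpr hpq)
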